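/- Let n, k ≥ 1 and Jₙ = [[0,1ₙ],[−1ₙ,0]]. On ℂ[z_{i,a} : 1 ≤ i ≤ n, 1 ≤ a ≤ k], define the 2n×2n matrix μ̂ of linear endomorphisms whose entries, for 1 ≤ i,j ≤ n, are: μ̂_{i,j} = i Σ_{a=1}^k z_{i,a} ∂/∂z_{j,a}, μ̂_{i,n+j} = (i/2)·(multiplication by Σ_{a=1}^k z_{i,a} z_{j,a}), μ̂_{n+i,j} = −2i Σ_{a=1}^k ∂/∂z_{i,a} ∘ ∂/∂z_{j,a}, and μ̂_{n+i,n+j} = −i Σ_{a=1}^k ∂/∂z_{i,a} ∘ (mult by z_{j,a}). For X ∈ Mat_{2n}(ℂ) with Xᵀ Jₙ + Jₙ X = 0, set π(X) = (i/2) Σ_{a,b=1}^{2n} μ̂_{a,b} X_{b,a}. Then: (a) π(X)∘π(Y) − π(Y)∘π(X) = π(XY − YX) for all X, Y ∈ sp_n(ℂ) (the Fock model of the oscillator representation); (b) for every g ∈ Mat_k(ℂ) with gᵀ g = 1_k, letting ρ(g) be the ℂ-algebra endomorphism determined by z_{i,a} ↦ Σ_b z_{i,b} g_{b,a}, one has ρ(g)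 ∘ π(X) = π(X) ∘ ρ(g) for all X ∈ sp_n(ℂ). -/

import Mathlib

open Matrix MvPolynomial

/-- The standard complex symplectic matrix `Jₙ = [[0, 1ₙ], [−1ₙ, 0]]`. -/
noncomputable def Jmat (n : ℕ) : Matrix (Fin n ⊕ Fin n) (Fin n ⊕ Fin n) ℂ :=
  Matrix.fromBlocks 0 1 (-1) 0

/-- The quantized moment map `μ̂` of the Fock model: a `2n×2n` matrix of linear
endomorphisms of `ℂ[z_{i,a}]` with entries
`μ̂_{i,j} = i Σ_a z_{i,a} ∂_{z_{j,a}}`, `μ̂_{i,n+j} = (i/2) Σ_a z_{i,a} z_{j,a}`,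
`μ̂_{n+i,j} = −2i Σ_a ∂_{z_{i,a}} ∂_{z_{j,a}}`, `μ̂_{n+i,n+j} = −i Σ_a ∂_{z_{i,a}} ∘ z_{j,a}`. -/
noncomputable def muHatFock (n k : ℕ) :
    Fin n ⊕ Fin n → Fin n ⊕ Fin n → Module.End ℂ (MvPolynomial (Fin n × Fin k) ℂ)
  | Sum.inl i, Sum.inl j =>
      Complex.I • ∑ a : Fin k,
        LinearMap.mulLeft ℂ (MvPolynomial.X (i, a)) *
          (MvPolynomial.pderiv (R := ℂ) (j, a)).toLinearMap
  | Sum.inl i, Sum.inr j =>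
      (Complex.I / 2) •
        LinearMap.mulLeft ℂ (∑ a : Fin k, MvPolynomial.X (i, a) * MvPolynomial.X (j, a))
  | Sum.inr i, Sum.inl j =>
      (-(2 * Complex.I)) • ∑ a : Fin k,
        (MvPolynomial.pderiv (R := ℂ) (i, a)).toLinearMap *
          (MvPolynomial.pderiv (R := ℂ) (j, a)).toLinearMap
  | Sum.inr i, Sum.inr j =>
      (-Complex.I) • ∑ a : Fin k,
        (MvPolynomial.pderiv (R := ℂ) (i, a)).toLinearMap *
          LinearMap.mulLeft ℂ (MvPolynomial.X (j, a))

/-- The Fock model representation `π(X) = (i/2) Σ_{a,b} μ̂_{a,b} X_{b,a}`. -/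
noncomputable def fockRep (n k : ℕ) (X : Matrix (Fin n ⊕ Fin n) (Fin n ⊕ Fin n) ℂ) :
    Module.End ℂ (MvPolynomial (Fin n × Fin k) ℂ) :=
  (Complex.I / 2) • ∑ a : Fin n ⊕ Fin n, ∑ b : Fin n ⊕ Fin n, X b a • muHatFock n k a b

/-- The right-translation operator `ρ(g) : f(z) ↦ f(zg)` determined by
`z_{i,a} ↦ Σ_b z_{i,b} g_{b,a}`. -/
noncomputable def rho (n k : ℕ) (g : Matrix (Fin k) (Fin k) ℂ) :
    MvPolynomial (Fin n × Fin k) ℂ →ₐ[ℂ] MvPolynomial (Fin n × Fin k) ℂ :=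
  MvPolynomial.aeval fun p =>
    ∑ b : Fin k, MvPolynomial.X (p.1, b) * MvPolynomial.C (g b p.2)

/-!
With `W = (z, -2∂)`, a `2n × k` matrix of operators, `[W_{p,a}, W_{q,b}] = 2 δ_{a,b} J_{p,q}` and
`μ̂ = (i/2) W Wᵀ J`, so `π(X) = ¼ Σ_{p,q} (Xᵀ J)_{p,q} (W Wᵀ)_{p,q}` is quadratic in `W`. The
commutator with a quadratic element acts linearly on the entries of `W`, for `X ∈ sp_n` through the
matrix `-Xᵀ`. Being a derivation, it is then known on every quadratic element, and this is (a).
For (b), `ρ(g)` rotates the columns of `W` by the orthogonal matrix `g`, which fixes `W Wᵀ`.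
-/

section PolynomialDerivations

variable {R σ : Type*}

theorem pderiv_pderiv_comm [CommSemiring R] (i j : σ) (p : MvPolynomial σ R) :
    pderiv i (pderiv j p) = pderiv j (pderiv i p) := by
  obtain rfl | hij := eq_or_ne i j
  · rfl
  · ext m
    simp only [coeff_pderiv, Finsupp.add_apply, Finsupp.single_eq_of_ne hij,
      Finsupp.single_eq_of_ne hij.symm, add_zero, add_right_comm m, mul_right_comm]

theorem derivation_aeval [CommSemiring R] [Fintype σ] {A M : Type*} [CommSemiring A] [Algebra R A]
    [AddCommMonoid M] [Module R M] [Module A M] (D : Derivation R A M) (f : σ → A)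
    (p : MvPolynomial σ R) :
    D (aeval f p) = ∑ i, aeval f (pderiv i p) • D (f i) := by
  classical
  induction p using MvPolynomial.induction_on with
  | C r => simp
  | add p q hp hq => simp only [map_add, hp, hq, add_smul, Finset.sum_add_distrib]
  | mul_X p j hp =>
    have hX (i : σ) : aeval f (pderiv i (X j : MvPolynomial σ R)) • D (f i) =
        if i = j then D (f j) else 0 := by
      rw [pderiv_X, Pi.single_apply]
      split_ifs <;> simp_all
    simp only [map_mul, map_add, aeval_X, Derivation.leibniz, smul_eq_mul, add_smul, mul_smul,
      Finset.sum_add_distrib, ← Finset.smul_sum, hX, hp, Finset.sum_ite_eq', Finset.mem_univ,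
      if_true]

theorem lie_derivation_mulLeft [CommRing R] {A : Type*} [CommRing A] [Algebra R A]
    (D : Derivation R A A) (f : A) :
    ⁅D.toLinearMap, LinearMap.mulLeft R f⁆ = LinearMap.mulLeft R (D f) := by
  ext g
  simp [Ring.lie_def, mul_comm]

theorem lie_pderiv_mulLeft_X [CommRing R] [DecidableEq σ] (i j : σ) :
    ⁅(pderiv (R := R) i).toLinearMap, LinearMap.mulLeft R (X j : MvPolynomial σ R)⁆ =
      if i = j then 1 else 0 := by
  rw [lie_derivation_mulLeft, pderiv_X, Pi.single_apply]
  split_ifs <;> simp_all [Module.End.one_eq_id]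

end PolynomialDerivations

section Contraction

variable {R E ι : Type*} [CommRing R] [AddCommGroup E] [Module R E] [Fintype ι]

/-- The pairing `Σ_{p,q} S_{p,q} K_{p,q}` of a matrix `K` of vectors (in the application, the
operators `K = W Wᵀ`) with a matrix `S` of scalars. -/
def contraction (K : Matrix ι ι E) : Matrix ι ι R →ₗ[R] E where
  toFun S := ∑ p, ∑ q, S p q • K p q
  map_add' S T := by simp only [Matrix.add_apply, add_smul, Finset.sum_add_distrib]
  map_smul' c S := by
    simp only [Matrix.smul_apply, smul_eq_mul, mul_smul, Finset.smul_sum, RingHom.id_apply]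

theorem contraction_apply (K : Matrix ι ι E) (S : Matrix ι ι R) :
    contraction K S = ∑ p, ∑ q, S p q • K p q :=
  rfl

theorem contraction_mul_left (K : Matrix ι ι E) (M T : Matrix ι ι R) :
    contraction K (M * T) = ∑ p, ∑ q, T p q • ∑ r, M r p • K r q := by
  simp only [contraction_apply, Matrix.mul_apply, Finset.sum_smul, Finset.smul_sum, smul_smul,
    mul_comm (T _ _)]
  rw [Finset.sum_comm_cycle]
  exact Finset.sum_congr rfl fun p _ => Finset.sum_comm

theorem contraction_mul_transpose (K : Matrix ι ι E) (T M : Matrix ι ι R) :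
    contraction K (T * Mᵀ) = ∑ p, ∑ q, T p q • ∑ r, M r q • K p r := by
  simp only [contraction_apply, Matrix.mul_apply, Matrix.transpose_apply, Finset.sum_smul,
    Finset.smul_sum, smul_smul]
  exact Finset.sum_congr rfl fun p _ => Finset.sum_comm

end Contraction

section CanonicalCommutationRelations

attribute [local instance] LieRing.ofAssociativeRing

theorem ring_lie_mul {A : Type*} [Ring A] (a b c : A) : ⁅a, b * c⁆ = ⁅a, b⁆ * c + b * ⁅a, c⁆ := by
  simp only [Ring.lie_def]
  noncomm_ring

theorem ring_mul_lie {A : Type*} [Ring A] (a b c : A) : ⁅a * b, c⁆ = a * ⁅b, c⁆ + ⁅a, c⁆ * b := by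
  simp only [Ring.lie_def]
  noncomm_ring

variable {R A ι κ : Type*} [CommRing R] [Ring A] [Algebra R A] [Fintype κ]

/-- The canonical commutation relations: distinct columns of `W` commute, and the commutators
within each column are the scalars prescribed by `Ω`. -/
def SatisfiesCCR [DecidableEq κ] (Ω : Matrix ι ι R) (W : Matrix ι κ A) : Prop :=
  ∀ p q a b, ⁅W p a, W q b⁆ = if a = b then algebraMap R A (Ω p q) else 0

theorem SatisfiesCCR.lie_mul_transpose [DecidableEq κ] {Ω : Matrix ι ι R} {W : Matrix ι κ A}
    (hW : SatisfiesCCR Ω W) (p q r : ι) (d : κ) :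
    ⁅(W * Wᵀ) p q, W r d⁆ = Ω q r • W p d + Ω p r • W q d := by
  simp [Matrix.mul_apply, sum_lie, ring_mul_lie, hW _ _ _ d, Finset.sum_add_distrib,
    Algebra.smul_def, Algebra.commutes]

theorem SatisfiesCCR.lie_contraction [DecidableEq κ] [Fintype ι] {Ω : Matrix ι ι R}
    {W : Matrix ι κ A} (hW : SatisfiesCCR Ω W) (S : Matrix ι ι R) (r : ι) (d : κ) :
    ⁅contraction (W * Wᵀ) S, W r d⁆ = ∑ p, ((S + Sᵀ) * Ω) p r • W p d := by
  calc ⁅contraction (W * Wᵀ) S, W r d⁆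
      = ∑ p, ∑ q, (S p q * Ω q r) • W p d + ∑ q, ∑ p, (S q p * Ω q r) • W p d := by
        simp only [contraction_apply, sum_lie, smul_lie, hW.lie_mul_transpose, smul_add,
          Finset.sum_add_distrib, smul_smul]
    _ = ∑ p, ∑ q, (S p q * Ω q r) • W p d + ∑ p, ∑ q, (S q p * Ω q r) • W p d := by
        rw [Finset.sum_comm (f := fun q p => (S q p * Ω q r) • W p d)]
    _ = ∑ p, ((S + Sᵀ) * Ω) p r • W p d := by
        simp only [Matrix.mul_apply, Matrix.add_apply, Matrix.transpose_apply, Finset.sum_smul,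
          add_mul, add_smul, Finset.sum_add_distrib]

theorem lie_mul_transpose [Fintype ι] {W : Matrix ι κ A} {D : A} {M : Matrix ι ι R}
    (hD : ∀ p a, ⁅D, W p a⁆ = ∑ r, M r p • W r a) (p q : ι) :
    ⁅D, (W * Wᵀ) p q⁆ = ∑ r, M r p • (W * Wᵀ) r q + ∑ r, M r q • (W * Wᵀ) p r := by
  simp only [Matrix.mul_apply, Matrix.transpose_apply, lie_sum, ring_lie_mul, hD, Finset.sum_mul,
    Finset.mul_sum, smul_mul_assoc, mul_smul_comm, Finset.sum_add_distrib, Finset.smul_sum]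
  congr 1 <;> exact Finset.sum_comm

theorem lie_contraction_mul_transpose [Fintype ι] {W : Matrix ι κ A} {D : A} {M : Matrix ι ι R}
    (hD : ∀ p a, ⁅D, W p a⁆ = ∑ r, M r p • W r a) (T : Matrix ι ι R) :
    ⁅D, contraction (W * Wᵀ) T⁆ = contraction (W * Wᵀ) (M * T + T * Mᵀ) := by
  rw [map_add, contraction_mul_left, contraction_mul_transpose]
  simp only [contraction_apply, lie_sum, lie_smul, lie_mul_transpose hD, smul_add,
    Finset.sum_add_distrib]

theorem sum_rotated_mul_rotated [DecidableEq κ] {g : Matrix κ κ R} (hg : g * gᵀ = 1)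
    (u v : κ → A) :
    ∑ a, (∑ b, g b a • u b) * (∑ c, g c a • v c) = ∑ a, u a * v a := by
  calc ∑ a, (∑ b, g b a • u b) * (∑ c, g c a • v c)
      = ∑ a, ∑ b, ∑ c, (g b a * g c a) • (u b * v c) := by
        simp only [Finset.sum_mul_sum, smul_mul_smul_comm]
    _ = ∑ b, ∑ c, ∑ a, (g b a * g c a) • (u b * v c) := by
        rw [← Finset.sum_comm_cycle]
    _ = ∑ b, ∑ c, (g * gᵀ) b c • (u b * v c) := by
        simp only [Matrix.mul_apply, Matrix.transpose_apply, Finset.sum_smul]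
    _ = ∑ a, u a * v a := by
        simp [hg, Matrix.one_apply, ite_smul]

theorem commute_mul_transpose [DecidableEq κ] {W : Matrix ι κ A} {P : A} {g : Matrix κ κ R}
    (hg : g * gᵀ = 1) (hP : ∀ p a, P * W p a = (∑ b, g b a • W p b) * P) (p q : ι) :
    Commute P ((W * Wᵀ) p q) := by
  calc P * (W * Wᵀ) p q
      = ∑ a, P * W p a * W q a := by
        simp only [Matrix.mul_apply, Matrix.transpose_apply, Finset.mul_sum, mul_assoc]
    _ = ∑ a, (∑ b, g b a • W p b) * (∑ c, g c a • W q c) * P := by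
        simp only [hP, mul_assoc]
    _ = (W * Wᵀ) p q * P := by
        rw [← Finset.sum_mul, sum_rotated_mul_rotated hg]
        simp only [Matrix.mul_apply, Matrix.transpose_apply]

theorem commute_contraction [Fintype ι] {K : Matrix ι ι A} {P : A}
    (hP : ∀ p q, Commute P (K p q)) (S : Matrix ι ι R) : Commute P (contraction K S) :=
  .sum_right _ _ _ fun p _ => .sum_right _ _ _ fun q _ => (hP p q).smul_right _

end CanonicalCommutationRelations

section SymplecticForm

theorem Jmat_eq_neg_J (n : ℕ) : Jmat n = -Matrix.J (Fin n) ℂ := by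
  simp [Jmat, Matrix.J, Matrix.fromBlocks_neg]

theorem Jmat_transpose (n : ℕ) : (Jmat n)ᵀ = -Jmat n := by
  rw [Jmat_eq_neg_J, transpose_neg, J_transpose]

theorem Jmat_mul_Jmat (n : ℕ) : Jmat n * Jmat n = -1 := by
  rw [Jmat_eq_neg_J, neg_mul_neg, J_squared]

theorem sum_Jmat_smul {M : Type*} [AddCommGroup M] [Module ℂ M] (n : ℕ) (q : Fin n ⊕ Fin n)
    (v : Fin n ⊕ Fin n → M) :
    ∑ r, Jmat n r q • v r = Sum.elim (fun j => -v (.inr j)) (fun j => v (.inl j)) q := by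
  rcases q with j | j <;> simp [Jmat, Matrix.one_apply, ite_smul]

end SymplecticForm

section FockModel

variable (n k : ℕ)

/-- The quantization of the `2n × k` matrix of canonical coordinates, in the normalization
`W = (z, -2∂)` for which `μ̂ = (i/2) W Wᵀ Jₙ`. -/
noncomputable def canonicalOperators :
    Matrix (Fin n ⊕ Fin n) (Fin k) (Module.End ℂ (MvPolynomial (Fin n × Fin k) ℂ)) :=
  Matrix.fromRows (.of fun i a => LinearMap.mulLeft ℂ (X (i, a)))
    (.of fun i a => (-2 : ℂ) • (pderiv (i, a)).toLinearMap)

theorem canonicalOperators_inl (i : Fin n) (a : Fin k) :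
    canonicalOperators n k (.inl i) a = LinearMap.mulLeft ℂ (X (i, a)) :=
  rfl

theorem canonicalOperators_inr (i : Fin n) (a : Fin k) :
    canonicalOperators n k (.inr i) a = (-2 : ℂ) • (pderiv (i, a)).toLinearMap :=
  rfl

attribute [local instance] LieRing.ofAssociativeRing in
theorem lie_canonicalOperators_inr_inl (i j : Fin n) (a b : Fin k) :
    ⁅canonicalOperators n k (.inr i) a, canonicalOperators n k (.inl j) b⁆ =
      if a = b then algebraMap ℂ _ (((2 : ℂ) • Jmat n) (.inr i) (.inl j)) else 0 := by
  have hJ : ((2 : ℂ) • Jmat n) (.inr i) (.inl j) = if i = j then -2 else 0 := by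
    simp [Jmat, Matrix.one_apply, apply_ite]
  calc ⁅canonicalOperators n k (.inr i) a, canonicalOperators n k (.inl j) b⁆
      = (-2 : ℂ) • ⁅(pderiv (i, a)).toLinearMap,
          LinearMap.mulLeft ℂ (X (j, b) : MvPolynomial (Fin n × Fin k) ℂ)⁆ := by
        rw [canonicalOperators_inl, canonicalOperators_inr, Ring.lie_def, Ring.lie_def,
          smul_mul_assoc, mul_smul_comm, smul_sub]
    _ = if a = b then algebraMap ℂ _ (((2 : ℂ) • Jmat n) (.inr i) (.inl j)) else 0 := by
        rw [lie_pderiv_mulLeft_X, hJ, Algebra.algebraMap_eq_smul_one]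
        simp only [Prod.mk.injEq, ite_and, smul_ite, ite_smul, smul_zero, zero_smul]
        split_ifs <;> rfl

attribute [local instance] LieRing.ofAssociativeRing in
theorem satisfiesCCR_canonicalOperators :
    SatisfiesCCR ((2 : ℂ) • Jmat n) (canonicalOperators n k) := by
  rintro (i | i) (j | j) a b
  · have hcomm : Commute (LinearMap.mulLeft ℂ (X (i, a) : MvPolynomial (Fin n × Fin k) ℂ))
        (LinearMap.mulLeft ℂ (X (j, b))) :=
      LinearMap.ext (mul_left_comm _ _)
    rw [canonicalOperators_inl, canonicalOperators_inl, commute_iff_lie_eq.mp hcomm]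
    simp [Jmat]
  · rw [← lie_skew, lie_canonicalOperators_inr_inl]
    obtain rfl | hab := eq_or_ne a b
    · simp [Jmat, Matrix.one_apply, eq_comm]
    · simp [hab, hab.symm]
  · exact lie_canonicalOperators_inr_inl n k i j a b
  · have hcomm : Commute ((-2 : ℂ) • (pderiv (R := ℂ) (i, a)).toLinearMap)
        ((-2 : ℂ) • (pderiv (j, b)).toLinearMap) :=
      .smul_left (.smul_right (LinearMap.ext (pderiv_pderiv_comm (i, a) (j, b))) _) _
    rw [canonicalOperators_inr, canonicalOperators_inr, commute_iff_lie_eq.mp hcomm]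
    simp [Jmat]

theorem muHatFock_eq (p q : Fin n ⊕ Fin n) :
    muHatFock n k p q = (Complex.I / 2) •
      ∑ r, Jmat n r q • (canonicalOperators n k * (canonicalOperators n k)ᵀ) p r := by
  refine .trans ?_ (congrArg _ (sum_Jmat_smul n q _).symm)
  rcases p with i | i <;> rcases q with j | j <;>
    simp only [muHatFock, Sum.elim_inl, Sum.elim_inr, Matrix.mul_apply, Matrix.transpose_apply,
      canonicalOperators_inl, canonicalOperators_inr, mul_smul_comm, smul_mul_assoc,
      ← Finset.smul_sum]
  · module
  · congr 1
    refine LinearMap.ext fun f => ?_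
    simp [Finset.sum_mul, mul_assoc]
  · module
  · module

theorem fockRep_eq_contraction (X : Matrix (Fin n ⊕ Fin n) (Fin n ⊕ Fin n) ℂ) :
    fockRep n k X = contraction (canonicalOperators n k * (canonicalOperators n k)ᵀ)
      ((1 / 4 : ℂ) • (Xᵀ * Jmat n)) := by
  have hI : Complex.I / 2 * (Complex.I / 2) = -(1 / 4) := by
    linear_combination Complex.I_mul_I / 4
  have hJ : (1 / 4 : ℂ) • (Xᵀ * Jmat n) = (-(1 / 4) : ℂ) • (Xᵀ * (Jmat n)ᵀ) := by
    rw [Jmat_transpose, mul_neg, smul_neg, neg_smul, neg_neg]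
  rw [fockRep, hJ, map_smul, contraction_mul_transpose, ← hI, mul_smul]
  congr 1
  simp only [muHatFock_eq, Finset.smul_sum, smul_smul, Matrix.transpose_apply, mul_left_comm]

variable {n}

attribute [local instance] LieRing.ofAssociativeRing in
theorem lie_fockRep_canonicalOperators {X : Matrix (Fin n ⊕ Fin n) (Fin n ⊕ Fin n) ℂ}
    (hX : Xᵀ * Jmat n + Jmat n * X = 0) (p : Fin n ⊕ Fin n) (a : Fin k) :
    ⁅fockRep n k X, canonicalOperators n k p a⁆ = ∑ r, (-Xᵀ) r p • canonicalOperators n k r a := by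
  have hsymm : (Xᵀ * Jmat n)ᵀ = Xᵀ * Jmat n := by
    rw [transpose_mul, transpose_transpose, Jmat_transpose, neg_mul]
    exact (eq_neg_of_add_eq_zero_left hX).symm
  have hM : ((1 / 4 : ℂ) • (Xᵀ * Jmat n) + ((1 / 4 : ℂ) • (Xᵀ * Jmat n))ᵀ) * ((2 : ℂ) • Jmat n) =
      -Xᵀ := by
    rw [transpose_smul, hsymm, ← add_smul, smul_mul_smul_comm, mul_assoc, Jmat_mul_Jmat]
    norm_num
  rw [fockRep_eq_contraction, (satisfiesCCR_canonicalOperators n k).lie_contraction, hM]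

theorem lie_fockRep_fockRep {X : Matrix (Fin n ⊕ Fin n) (Fin n ⊕ Fin n) ℂ}
    (hX : Xᵀ * Jmat n + Jmat n * X = 0) (Y : Matrix (Fin n ⊕ Fin n) (Fin n ⊕ Fin n) ℂ) :
    ⁅fockRep n k X, fockRep n k Y⁆ = fockRep n k ⁅X, Y⁆ := by
  have hXJ : Jmat n * X = -(Xᵀ * Jmat n) := eq_neg_of_add_eq_zero_right hX
  rw [fockRep_eq_contraction n k Y,
    lie_contraction_mul_transpose (lie_fockRep_canonicalOperators k hX), fockRep_eq_contraction]
  congr 1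
  simp only [Ring.lie_def, transpose_neg, transpose_transpose, transpose_sub, transpose_mul,
    mul_smul_comm, smul_mul_assoc, mul_neg, neg_mul, mul_assoc, hXJ, sub_mul]
  module

variable {k}

theorem pderiv_rho (g : Matrix (Fin k) (Fin k) ℂ) (i : Fin n) (b : Fin k)
    (f : MvPolynomial (Fin n × Fin k) ℂ) :
    pderiv (i, b) (rho n k g f) = ∑ a, g b a • rho n k g (pderiv (i, a) f) := by
  have hX (j : Fin n) (a : Fin k) :
      pderiv (i, b) (∑ c, X (j, c) * C (g c a) : MvPolynomial (Fin n × Fin k) ℂ) =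
        if j = i then C (g b a) else 0 := by
    simp [pderiv_X, Pi.single_apply, ite_and]
  rw [rho, derivation_aeval, Fintype.sum_prod_type,
    Fintype.sum_eq_single i fun j hj => by simp [hX, hj]]
  simp only [hX, if_true, smul_eq_mul, smul_eq_C_mul, mul_comm]

theorem rho_mul_canonicalOperators {g : Matrix (Fin k) (Fin k) ℂ} (hg : gᵀ * g = 1)
    (p : Fin n ⊕ Fin n) (a : Fin k) :
    (rho n k g).toLinearMap * canonicalOperators n k p a =
      (∑ b, g b a • canonicalOperators n k p b) * (rho n k g).toLinearMap := by
  refine LinearMap.ext fun f => ?_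
  rcases p with i | i
  · have hX : rho n k g (X (i, a)) = ∑ b, g b a • X (i, b) := by
      simp only [rho, aeval_X, smul_eq_C_mul, mul_comm]
    simp only [canonicalOperators_inl, Module.End.mul_apply, AlgHom.toLinearMap_apply,
      LinearMap.mulLeft_apply, map_mul, hX, LinearMap.sum_apply, LinearMap.smul_apply,
      Finset.sum_mul, smul_mul_assoc]
  · have horth : ∑ b, g b a • pderiv (i, b) (rho n k g f) = rho n k g (pderiv (i, a) f) := by
      calc ∑ b, g b a • pderiv (i, b) (rho n k g f)
          = ∑ b, ∑ c, (g b a * g b c) • rho n k g (pderiv (i, c) f) := by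
            simp only [pderiv_rho, Finset.smul_sum, smul_smul]
        _ = ∑ c, (gᵀ * g) a c • rho n k g (pderiv (i, c) f) := by
            rw [Finset.sum_comm]
            simp only [Matrix.mul_apply, Matrix.transpose_apply, Finset.sum_smul]
        _ = rho n k g (pderiv (i, a) f) := by
            simp [hg, Matrix.one_apply, ite_smul]
    simp only [canonicalOperators_inr, Module.End.mul_apply, AlgHom.toLinearMap_apply,
      LinearMap.smul_apply, Derivation.coeFn_coe, map_smul, ← horth, LinearMap.sum_apply,
      Finset.smul_sum]
    exact Finset.sum_congr rfl fun b _ => smul_comm _ _ _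

theorem commute_rho_fockRep {g : Matrix (Fin k) (Fin k) ℂ} (hg : gᵀ * g = 1)
    (X : Matrix (Fin n ⊕ Fin n) (Fin n ⊕ Fin n) ℂ) :
    Commute (rho n k g).toLinearMap (fockRep n k X) := by
  rw [fockRep_eq_contraction]
  exact commute_contraction
    (commute_mul_transpose (mul_eq_one_comm.mp hg) (rho_mul_canonicalOperators hg)) _

end FockModel

theorem fockRep_lie_hom_and_Ok_invariant_general (n k : ℕ) :
    (∀ X Y : Matrix (Fin n ⊕ Fin n) (Fin n ⊕ Fin n) ℂ,
      Xᵀ * Jmat n + Jmat n * X = 0 →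
      fockRep n k X * fockRep n k Y - fockRep n k Y * fockRep n k X
        = fockRep n k (X * Y - Y * X)) ∧
    (∀ g : Matrix (Fin k) (Fin k) ℂ, gᵀ * g = 1 →
      ∀ X : Matrix (Fin n ⊕ Fin n) (Fin n ⊕ Fin n) ℂ,
        (rho n k g).toLinearMap ∘ₗ fockRep n k X
          = fockRep n k X ∘ₗ (rho n k g).toLinearMap) :=
  ⟨fun _ Y hX => lie_fockRep_fockRep k hX Y, fun _ hg X => commute_rho_fockRep hg X⟩

theorem fockRep_lie_hom_and_Ok_invariant (n k : ℕ) (hn : 1 ≤ n) (hk : 1 ≤ k) :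
    -- (a) `π` is a Lie algebra homomorphism on `sp_n(ℂ)` (the Fock model of the
    -- oscillator representation)
    (∀ X Y : Matrix (Fin n ⊕ Fin n) (Fin n ⊕ Fin n) ℂ,
      Xᵀ * Jmat n + Jmat n * X = 0 → Yᵀ * Jmat n + Jmat n * Y = 0 →
      fockRep n k X * fockRep n k Y - fockRep n k Y * fockRep n k X
        = fockRep n k (X * Y - Y * X)) ∧
    -- (b) `π(X)` commutes with the action of `O_k(ℂ)`
    (∀ g : Matrix (Fin k) (Fin k) ℂ, gᵀ * g = 1 →
      ∀ X : Matrix (Fin n ⊕ Fin n) (Fin n ⊕ Fin n) ℂ,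
        Xᵀ * Jmat n + Jmat n * X = 0 →
        (rho n k g).toLinearMap ∘ₗ fockRep n k X
          = fockRep n k X ∘ₗ (rho n k g).toLinearMap) := by
  obtain ⟨hlie, hcomm⟩ := fockRep_lie_hom_and_Ok_invariant_general n k
  exact ⟨fun X Y hX _ => hlie X Y hX, fun g hg X _ => hcomm g hg X⟩
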